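/- arXiv:2109.07777 — 5 statements merged into one kernel-verified Lean document; each statement's English description precedes it below -/
import Mathlib

section
/- For every N ≥ 1 and every nonzero vector Φ ∈ ℝ^(2^N), there exists a probability vector P on the 4^N byte-4 values of N grabits such that ∂_N P = Φ/‖Φ‖₁; in particular ∂_N P = a·Φ with prefactor a = 1/‖Φ‖₁ > 0. -/
open scoped BigOperators

/-- The byte-4 index set of `N` grabits: pairs `(i, σ)` of bit strings. -/
abbrev Byte4 (N : ℕ) := (Fin N → Fin 2) × (Fin N → Fin 2)

/-- The `N`-grabit difference map `∂_N`:
`(∂_N P) i = ∑_σ (-1)^(σ₁+⋯+σ_N) P (i, σ)`. -/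
noncomputable def gradMap (N : ℕ) (P : Byte4 N → ℝ) : (Fin N → Fin 2) → ℝ :=
  fun i => ∑ σ : Fin N → Fin 2, (-1 : ℝ) ^ (∑ j, (σ j : ℕ)) * P (i, σ)

/-- The ℓ¹ norm of a vector on a finite index set. -/
noncomputable def l1norm {α : Type*} [Fintype α] (f : α → ℝ) : ℝ := ∑ a, |f a|

/-!
Put the mass `|Φ i|` on a single byte `(i, σ)` whose sign `(-1) ^ (σ₁+⋯+σ_N)` is that of `Φ i`;
both signs occur because there is at least one bit to flip. Each row then has at most one nonzero
term, so nothing cancels: the difference is `Φ`, and the total mass is `‖Φ‖₁`.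
-/

theorem l1norm_pos {α : Type*} [Fintype α] {f : α → ℝ} (hf : f ≠ 0) : 0 < l1norm f := by
  obtain ⟨a, ha⟩ := Function.ne_iff.mp hf
  exact Finset.sum_pos' (fun _ _ => abs_nonneg _) ⟨a, Finset.mem_univ a, abs_pos.mpr ha⟩

theorem l1norm_smul {α : Type*} [Fintype α] (c : ℝ) (f : α → ℝ) :
    l1norm (c • f) = |c| * l1norm f := by
  simp only [l1norm, Pi.smul_apply, smul_eq_mul, abs_mul, Finset.mul_sum]

theorem exists_neg_one_pow_sum_mul_abs_eq {ι R : Type*} [Fintype ι] [Nonempty ι]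
    [Ring R] [LinearOrder R] [IsOrderedRing R] (x : R) :
    ∃ σ : ι → Fin 2, (-1 : R) ^ (∑ j, (σ j : ℕ)) * |x| = x := by
  classical
  rcases le_total 0 x with hx | hx
  · exact ⟨0, by simp [abs_of_nonneg hx]⟩
  · obtain ⟨j₀⟩ := ‹Nonempty ι›
    have hsum : ∑ j, ((Pi.single j₀ 1 : ι → Fin 2) j : ℕ) = 1 := by
      simp [Pi.single_apply, apply_ite]
    exact ⟨Pi.single j₀ 1, by rw [hsum, pow_one, neg_one_mul, abs_of_nonpos hx, neg_neg]⟩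

/-- The weight on `α × β` carried by the graph of `s : α → β`, with mass `w a` at `(a, s a)`. With
`s` a choice of sign bits for each `a`, it is the candidate preimage under `gradMap`. -/
def graphWeight {α β M : Type*} [DecidableEq β] [Zero M] (s : α → β) (w : α → M) : α × β → M :=
  fun b => if b.2 = s b.1 then w b.1 else 0

namespace graphWeight

theorem nonneg {α β M : Type*} [DecidableEq β] [Zero M] [Preorder M] (s : α → β) {w : α → M}
    (hw : ∀ a, 0 ≤ w a) (b : α × β) : 0 ≤ graphWeight s w b :=
  ite_nonneg (hw b.1) le_rfl

theorem sum_eq {α β M : Type*} [Fintype α] [Fintype β] [DecidableEq β] [AddCommMonoid M]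
    (s : α → β) (w : α → M) : ∑ b, graphWeight s w b = ∑ a, w a := by
  simp only [graphWeight, Fintype.sum_prod_type, Finset.sum_ite_eq', Finset.mem_univ, if_true]

theorem gradMap_apply {N : ℕ} (s : (Fin N → Fin 2) → Fin N → Fin 2) (w : (Fin N → Fin 2) → ℝ)
    (i : Fin N → Fin 2) :
    gradMap N (graphWeight s w) i = (-1) ^ (∑ j, (s i j : ℕ)) * w i := by
  simp only [gradMap, graphWeight, mul_ite, mul_zero, Finset.sum_ite_eq', Finset.mem_univ, if_true]

end graphWeight

theorem exists_nonneg_sum_eq_l1norm_gradMap_eq {N : ℕ} [NeZero N] (Φ : (Fin N → Fin 2) → ℝ) :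
    ∃ P : Byte4 N → ℝ, (∀ b, 0 ≤ P b) ∧ ∑ b, P b = l1norm Φ ∧ gradMap N P = Φ := by
  choose s hs using fun i => exists_neg_one_pow_sum_mul_abs_eq (ι := Fin N) (Φ i)
  exact ⟨graphWeight s fun i => |Φ i|, graphWeight.nonneg s fun i => abs_nonneg (Φ i),
    graphWeight.sum_eq s _, funext fun i => (graphWeight.gradMap_apply s _ i).trans (hs i)⟩

/-- every nonzero `Φ ∈ ℝ^(2^N)` arises, after normalization by its ℓ¹
norm, as the `N`-grabit difference of a probability vector on byte-4 values; the
prefactor `a = 1/‖Φ‖₁` is positive. -/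
theorem exists_probVec_gradMap_eq (N : ℕ) (hN : 1 ≤ N)
    (Φ : (Fin N → Fin 2) → ℝ) (hΦ : Φ ≠ 0) :
    ∃ P : Byte4 N → ℝ,
      (∀ b, 0 ≤ P b) ∧ (∑ b, P b = 1) ∧
      gradMap N P = (1 / l1norm Φ) • Φ ∧ 0 < 1 / l1norm Φ := by
  have : NeZero N := ⟨Nat.one_le_iff_ne_zero.mp hN⟩
  have hpos : 0 < 1 / l1norm Φ := one_div_pos.mpr (l1norm_pos hΦ)
  have hnorm : l1norm ((1 / l1norm Φ) • Φ) = 1 := by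
    rw [l1norm_smul, abs_of_pos hpos, one_div_mul_cancel (l1norm_pos hΦ).ne']
  obtain ⟨P, hP_nonneg, hP_sum, hP_grad⟩ :=
    exists_nonneg_sum_eq_l1norm_gradMap_eq ((1 / l1norm Φ) • Φ)
  exact ⟨P, hP_nonneg, hP_sum.trans hnorm, hP_grad, hpos⟩
end

section
/- Index the byte-4 values of two grabits by pairs ((i₁,σ₁),(i₂,σ₂)) with i₁,σ₁,i₂,σ₂ ∈ {0,1}, and let S_CNOT be the permutation matrix on ℝ^16 induced by the bijection ((i₁,σ₁),(i₂,σ₂)) ↦ ((i₁,σ₁),(i₂⊕i₁,σ₂)), where ⊕ is addition mod 2. Then S_CNOT is a stochastic matrix and satisfies ∂₂ ∘ S_CNOT = U_CNOT ∘ ∂₂, where U_CNOT is the permutation matrix on ℝ^(2²) (indexed by (i₁,i₂) ∈ {0,1}²) induced by (i₁,i₂) ↦ (i₁, i₂⊕i₁). -/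
open scoped BigOperators

/-- Byte-4 values of two grabits: pairs `((i₁,σ₁),(i₂,σ₂))`. -/
abbrev TwoGrabit := (Fin 2 × Fin 2) × (Fin 2 × Fin 2)

/-- The two-grabit difference map `∂₂`:
`(∂₂ P)_(i₁,i₂) = ∑_{σ₁,σ₂} (−1)^(σ₁+σ₂) P ((i₁,σ₁),(i₂,σ₂))`. -/
noncomputable def del2 (P : TwoGrabit → ℝ) : Fin 2 × Fin 2 → ℝ :=
  fun p => ∑ σ₁ : Fin 2, ∑ σ₂ : Fin 2,
    (-1 : ℝ) ^ ((σ₁ : ℕ) + (σ₂ : ℕ)) * P ((p.1, σ₁), (p.2, σ₂))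

/-- A stochastic matrix: nonnegative entries, each column sums to 1. -/
def IsStochastic {α : Type*} [Fintype α] (S : Matrix α α ℝ) : Prop :=
  (∀ i j, 0 ≤ S i j) ∧ ∀ j, ∑ i, S i j = 1

/-- The CNOT bijection on byte-4 values: `((i₁,σ₁),(i₂,σ₂)) ↦ ((i₁,σ₁),(i₂⊕i₁,σ₂))`. -/
def cnotB4 : TwoGrabit → TwoGrabit :=
  fun x => ((x.1.1, x.1.2), (x.2.1 + x.1.1, x.2.2))

/-- The permutation matrix on `ℝ^16` induced by `cnotB4`. -/
def S_CNOT : Matrix TwoGrabit TwoGrabit ℝ :=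
  fun x y => if x = cnotB4 y then 1 else 0

/-- The CNOT bijection on logical values: `(i₁,i₂) ↦ (i₁,i₂⊕i₁)`. -/
def cnotLogical : Fin 2 × Fin 2 → Fin 2 × Fin 2 :=
  fun x => (x.1, x.2 + x.1)

/-- The permutation matrix on `ℝ^(2²)` induced by `cnotLogical`. -/
def U_CNOT : Matrix (Fin 2 × Fin 2) (Fin 2 × Fin 2) ℝ :=
  fun x y => if x = cnotLogical y then 1 else 0

/-!
CNOT permutes the logical bits `(i₁,i₂)` and fixes the signs `(σ₁,σ₂)`, while `∂₂` is a sum over the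
signs with weights independent of the logical bits. Hence relabelling the logical bits by any
permutation commutes with `∂₂`.
-/

/-- The lift of a permutation `e` of the logical values `(i₁,i₂)` to byte-4 values: it acts by `e`
on the logical bits and leaves the signs `(σ₁,σ₂)` alone. -/
def logicalLift (e : Equiv.Perm (Fin 2 × Fin 2)) : Equiv.Perm TwoGrabit :=
  (Equiv.prodProdProdComm _ _ _ _).permCongr (e.prodCongr (Equiv.refl (Fin 2 × Fin 2)))

theorem del2_comp_logicalLift (e : Equiv.Perm (Fin 2 × Fin 2)) (P : TwoGrabit → ℝ) :
    del2 (P ∘ logicalLift e) = del2 P ∘ e :=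
  rfl

theorem logicalLift_inv (e : Equiv.Perm (Fin 2 × Fin 2)) :
    (logicalLift e)⁻¹ = logicalLift e⁻¹ :=
  rfl

theorem del2_permMatrix_logicalLift_mulVec (e : Equiv.Perm (Fin 2 × Fin 2)) (P : TwoGrabit → ℝ) :
    del2 (((logicalLift e).permMatrix ℝ).mulVec P) = (e.permMatrix ℝ).mulVec (del2 P) := by
  rw [Matrix.permMatrix_mulVec, Matrix.permMatrix_mulVec, del2_comp_logicalLift]

theorem isStochastic_iff_mem_colStochastic {α : Type*} [Fintype α] [DecidableEq α]
    {S : Matrix α α ℝ} : IsStochastic S ↔ S ∈ Matrix.colStochastic ℝ α :=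
  Matrix.mem_colStochastic_iff_sum.symm

-- `e.permMatrix` sends the basis vector at `y` to the one at `e⁻¹ y`, hence the inverse.
theorem permMatrix_inv_apply {α R : Type*} [DecidableEq α] [Zero R] [One R]
    (e : Equiv.Perm α) (x y : α) : e⁻¹.permMatrix R x y = if x = e y then 1 else 0 := by
  simp [PEquiv.toMatrix_apply, Equiv.symm_apply_eq]

theorem cnotLogical_involutive : Function.Involutive cnotLogical := by
  rintro ⟨i₁, i₂⟩
  have add_self : i₁ + i₁ = 0 := by decide +revert
  simp only [cnotLogical, add_assoc, add_self, add_zero]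

/-- The CNOT gate as a permutation of the logical values. -/
def cnotPerm : Equiv.Perm (Fin 2 × Fin 2) :=
  cnotLogical_involutive.toPerm

theorem U_CNOT_eq_permMatrix : U_CNOT = cnotPerm⁻¹.permMatrix ℝ := by
  ext x y
  exact (permMatrix_inv_apply cnotPerm x y).symm

theorem S_CNOT_eq_permMatrix : S_CNOT = (logicalLift cnotPerm)⁻¹.permMatrix ℝ := by
  ext x y
  exact (permMatrix_inv_apply (logicalLift cnotPerm) x y).symm

/-- `S_CNOT` is stochastic and `∂₂ ∘ S_CNOT = U_CNOT ∘ ∂₂`. -/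
theorem S_CNOT_stochastic_and_intertwines :
    IsStochastic S_CNOT ∧
      ∀ P : TwoGrabit → ℝ, del2 (S_CNOT.mulVec P) = U_CNOT.mulVec (del2 P) := by
  rw [S_CNOT_eq_permMatrix, U_CNOT_eq_permMatrix]
  refine ⟨isStochastic_iff_mem_colStochastic.mpr Matrix.permMatrix_mem_colStochastic, fun P => ?_⟩
  rw [logicalLift_inv, del2_permMatrix_logicalLift_mulVec]
end

section
/- Let S_H = (1/2)·[[1,0,1,0],[0,1,0,1],[1,0,0,1],[0,1,1,0]]. For every n ≥ 1, the 2n-fold iterate applied to the probability vector (1,0,0,0)ᵀ equals S_H^{2n}(1,0,0,0)ᵀ = (1/4)·(1,1,1,1)ᵀ + 2^{−(n+1)}·(1,−1,0,0)ᵀ; consequently ∂₁(S_H^{2n}(1,0,0,0)ᵀ) = (2^{−n}, 0), i.e., the amplitude of the emulated state decreases exponentially with the number of Hadamard gates while the state direction remains correct. -/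
open scoped BigOperators Matrix

/-- The single-grabit difference map `∂₁ : ℝ⁴ → ℝ²`,
`P = (P₀,P₁,P₂,P₃) ↦ (P₀ − P₁, P₂ − P₃)`. -/
def del1 (P : Fin 4 → ℝ) : Fin 2 → ℝ := ![P 0 - P 1, P 2 - P 3]

/-- The stochastic map emulating the Hadamard gate. -/
noncomputable def S_H : Matrix (Fin 4) (Fin 4) ℝ :=
  (1 / 2 : ℝ) • !![1, 0, 1, 0; 0, 1, 0, 1; 1, 0, 0, 1; 0, 1, 1, 0]

/-!
Two facts determine the iterates. First, `∂₁` intertwines `S_H` with `1/√2` times the Hadamard gate,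
an involution, so two steps multiply `∂₁ P` by `1/2`. Second, a vector in the range of `S_H` has
`Q₀ + Q₁ = Q₂ + Q₃`, and such a vector is recovered from `∂₁ Q` and its total mass, which the
stochastic matrix `S_H` preserves.
-/

/-- The Hadamard gate, in its usual normalization as an orthogonal matrix. -/
noncomputable def hadamardGate : Matrix (Fin 2) (Fin 2) ℝ := (√2)⁻¹ • !![1, 1; 1, -1]

/-- The antisymmetric lift of a difference vector to `ℝ⁴`; a right inverse of `∂₁` up to a factor
`2`, used to recover a vector from its image under `∂₁`. -/
def antisymmLift (v : Fin 2 → ℝ) : Fin 4 → ℝ := ![v 0, -v 0, v 1, -v 1]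

theorem antisymmLift_smul (c : ℝ) (v : Fin 2 → ℝ) :
    antisymmLift (c • v) = c • antisymmLift v := by
  simp [antisymmLift]

theorem inv_sqrt_two_mul_self : (√2)⁻¹ * (√2)⁻¹ = (1 / 2 : ℝ) := by
  rw [← mul_inv, Real.mul_self_sqrt zero_le_two, one_div]

theorem hadamardGate_sq : hadamardGate ^ 2 = 1 := by
  rw [sq, hadamardGate, smul_mul_smul_comm, inv_sqrt_two_mul_self]
  ext i j
  fin_cases i <;> fin_cases j <;> norm_num [Matrix.mul_apply, Fin.sum_univ_two]

theorem S_H_mulVec (P : Fin 4 → ℝ) :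
    S_H *ᵥ P = ![(P 0 + P 2) / 2, (P 1 + P 3) / 2, (P 0 + P 3) / 2, (P 1 + P 2) / 2] := by
  ext i
  fin_cases i <;>
    simp only [S_H, Matrix.mulVec, dotProduct, Fin.sum_univ_four, Matrix.smul_apply, smul_eq_mul,
      Matrix.of_apply, Matrix.cons_val', Matrix.cons_val_fin_one, Matrix.cons_val, Fin.zero_eta,
      Fin.mk_one, Fin.reduceFinMk] <;>
    ring

theorem S_H_mem_colStochastic : S_H ∈ Matrix.colStochastic ℝ (Fin 4) := by
  rw [Matrix.mem_colStochastic_iff_sum]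
  constructor
  · intro i j
    fin_cases i <;> fin_cases j <;> simp [S_H]
  · intro j
    simp only [S_H, Fin.sum_univ_four, Matrix.smul_apply, smul_eq_mul, Matrix.of_apply,
      Matrix.cons_val', Matrix.cons_val]
    fin_cases j <;> norm_num

theorem sum_S_H_pow_mulVec (k : ℕ) (P : Fin 4 → ℝ) : ∑ i, (S_H ^ k *ᵥ P) i = ∑ i, P i :=
  Matrix.sum_mulVec_of_mem_colStochastic (pow_mem S_H_mem_colStochastic k)

theorem S_H_mulVec_pair_sums_eq (P : Fin 4 → ℝ) :
    (S_H *ᵥ P) 0 + (S_H *ᵥ P) 1 = (S_H *ᵥ P) 2 + (S_H *ᵥ P) 3 := by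
  simp only [S_H_mulVec, Matrix.cons_val]
  ring

theorem eq_mean_add_antisymmLift_of_pair_sums_eq {Q : Fin 4 → ℝ}
    (hQ : Q 0 + Q 1 = Q 2 + Q 3) :
    Q = ((∑ i, Q i) / 4) • ![1, 1, 1, 1] + (1 / 2 : ℝ) • antisymmLift (del1 Q) := by
  ext i
  fin_cases i <;>
    simp only [antisymmLift, del1, Fin.sum_univ_four, Pi.add_apply, Pi.smul_apply, smul_eq_mul,
      Matrix.cons_val, Fin.zero_eta, Fin.mk_one, Fin.reduceFinMk] <;>
    linarith

theorem S_H_pow_mulVec_eq_mean_add_antisymmLift {k : ℕ} (hk : k ≠ 0) (P : Fin 4 → ℝ) :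
    S_H ^ k *ᵥ P = ((∑ i, P i) / 4) • ![1, 1, 1, 1] +
      (1 / 2 : ℝ) • antisymmLift (del1 (S_H ^ k *ᵥ P)) := by
  have pair_sums_eq : (S_H ^ k *ᵥ P) 0 + (S_H ^ k *ᵥ P) 1 =
      (S_H ^ k *ᵥ P) 2 + (S_H ^ k *ᵥ P) 3 := by
    rw [← mul_pow_sub_one hk S_H, ← Matrix.mulVec_mulVec]
    exact S_H_mulVec_pair_sums_eq _
  rw [← sum_S_H_pow_mulVec k P]
  exact eq_mean_add_antisymmLift_of_pair_sums_eq pair_sums_eq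

theorem del1_S_H_mulVec (P : Fin 4 → ℝ) :
    del1 (S_H *ᵥ P) = ((√2)⁻¹ • hadamardGate) *ᵥ del1 P := by
  rw [S_H_mulVec, hadamardGate, smul_smul, inv_sqrt_two_mul_self]
  ext i
  fin_cases i <;>
    simp only [del1, Matrix.mulVec, dotProduct, Fin.sum_univ_two, Matrix.smul_apply, smul_eq_mul,
      Matrix.of_apply, Matrix.cons_val', Matrix.cons_val_fin_one, Matrix.cons_val, Fin.zero_eta,
      Fin.mk_one] <;>
    ring

theorem del1_S_H_pow_mulVec (k : ℕ) (P : Fin 4 → ℝ) :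
    del1 (S_H ^ k *ᵥ P) = ((√2)⁻¹ • hadamardGate) ^ k *ᵥ del1 P := by
  induction k with
  | zero => simp
  | succ k ih =>
    rw [pow_succ', pow_succ', ← Matrix.mulVec_mulVec, ← Matrix.mulVec_mulVec, del1_S_H_mulVec, ih]

theorem del1_S_H_pow_two_mul_mulVec (n : ℕ) (P : Fin 4 → ℝ) :
    del1 (S_H ^ (2 * n) *ᵥ P) = ((1 : ℝ) / 2 ^ n) • del1 P := by
  have gate_sq : ((√2)⁻¹ • hadamardGate) ^ 2 = (1 / 2 : ℝ) • 1 := by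
    rw [smul_pow, hadamardGate_sq, sq, inv_sqrt_two_mul_self]
  rw [del1_S_H_pow_mulVec, pow_mul, gate_sq, smul_pow, one_pow, Matrix.smul_mulVec,
    Matrix.one_mulVec, one_div_pow]

theorem S_H_iterate_general (P : Fin 4 → ℝ) (n : ℕ) (hn : 1 ≤ n) :
    S_H ^ (2 * n) *ᵥ P =
        ((∑ i, P i) / 4) • ![1, 1, 1, 1] +
          ((1 : ℝ) / 2 ^ (n + 1)) • antisymmLift (del1 P) ∧
      del1 (S_H ^ (2 * n) *ᵥ P) = ((1 : ℝ) / 2 ^ n) • del1 P := by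
  refine ⟨?_, del1_S_H_pow_two_mul_mulVec n P⟩
  rw [S_H_pow_mulVec_eq_mean_add_antisymmLift (by lia), del1_S_H_pow_two_mul_mulVec,
    antisymmLift_smul, smul_smul, ← one_div_pow, ← pow_succ', one_div_pow]

/-- the `2n`-fold iterate of `S_H` applied to the probability vector
`(1,0,0,0)ᵀ` equals `(1/4)(1,1,1,1)ᵀ + 2^{-(n+1)}(1,-1,0,0)ᵀ`, and its difference
`∂₁` equals `(2^{-n}, 0)`: the amplitude decays exponentially with the number of
Hadamard gates while the state direction remains correct. -/
theorem S_H_iterate (n : ℕ) (hn : 1 ≤ n) :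
    (S_H ^ (2 * n)).mulVec ![1, 0, 0, 0] =
        (1 / 4 : ℝ) • ![1, 1, 1, 1] + ((1 : ℝ) / 2 ^ (n + 1)) • ![1, -1, 0, 0] ∧
      del1 ((S_H ^ (2 * n)).mulVec ![1, 0, 0, 0]) = ![(1 : ℝ) / 2 ^ n, 0] := by
  simpa [Fin.sum_univ_four, antisymmLift, del1] using S_H_iterate_general ![1, 0, 0, 0] n hn
end

section
/- Let q > 0 and let P = (P₀,P₁,P₂,P₃) be a probability vector on {0,1,2,3} satisfying P₀ − P₁ = q·(P₂ − P₃). Then |P₂ − P₃| ≤ min((P₀+P₁)/q, 1 − (P₀+P₁)) ≤ 1/(1+q), and the maximal value 1/(1+q) is attained by the probability vector P = (q/(1+q), 0, 1/(1+q), 0), which moreover satisfies P₀+P₁ = q/(1+q). (Maximum-contrast bound for a single grabit with amplitude ratio q.) -/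
open scoped BigOperators Matrix

/-!
Writing `s = P₀ + P₁`, the amplitude relation gives `q |P₂ − P₃| = |P₀ − P₁| ≤ s`, while
`|P₂ − P₃| ≤ P₂ + P₃ = 1 − s`. The first bound increases with `s` and the second decreases; they
cross at `s = q / (1 + q)`. Concentrating all the mass on `P₀` and `P₂` makes both sharp there.
-/

theorem abs_sub_le_add_of_nonneg {G : Type*} [AddCommGroup G] [LinearOrder G] [IsOrderedAddMonoid G]
    {a b : G} (ha : 0 ≤ a) (hb : 0 ≤ b) : |a - b| ≤ a + b := by
  simpa only [abs_of_nonneg ha, abs_of_nonneg hb] using abs_sub a b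

section Field

variable {K : Type*} [Field K]

/-- The probability vector of maximal contrast for an amplitude ratio `q > 0`: the mass is shared
between the indices `0` and `2` in the proportion `q : 1`. -/
def maxContrastVector (q : K) : Fin 4 → K :=
  ![q / (1 + q), 0, 1 / (1 + q), 0]

theorem maxContrastVector_sub_eq_mul (q : K) :
    maxContrastVector q 0 - maxContrastVector q 1 =
      q * (maxContrastVector q 2 - maxContrastVector q 3) := by
  simp only [maxContrastVector, Matrix.cons_val, sub_zero, mul_one_div]

theorem maxContrastVector_apply_zero_add_apply_one (q : K) :
    maxContrastVector q 0 + maxContrastVector q 1 = q / (1 + q) := by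
  simp only [maxContrastVector, Matrix.cons_val, add_zero]

end Field

section OrderedField

variable {K : Type*} [Field K] [LinearOrder K] [IsStrictOrderedRing K]

theorem abs_le_add_div_of_sub_eq_mul {q a b c : K} (hq : 0 < q) (ha : 0 ≤ a) (hb : 0 ≤ b)
    (h : a - b = q * c) : |c| ≤ (a + b) / q := by
  rw [le_div_iff₀' hq]
  calc
    q * |c| = |a - b| := by rw [h, abs_mul, abs_of_pos hq]
    _ ≤ a + b := abs_sub_le_add_of_nonneg ha hb

theorem min_div_sub_le_div_one_add {q : K} (hq : 0 < q) (s t : K) :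
    min (s / q) (t - s) ≤ t / (1 + q) := by
  have h_left : min (s / q) (t - s) * q ≤ s := (le_div_iff₀ hq).mp (min_le_left _ _)
  have h_right : min (s / q) (t - s) ≤ t - s := min_le_right _ _
  rw [le_div_iff₀ (by positivity)]
  linarith

theorem abs_contrast_le_one_sub {P : Fin 4 → K} (hP : P ∈ stdSimplex K (Fin 4)) :
    |P 2 - P 3| ≤ 1 - (P 0 + P 1) := by
  have h_sum : P 0 + P 1 + P 2 + P 3 = 1 := Fin.sum_univ_four P ▸ hP.2
  calc
    |P 2 - P 3| ≤ P 2 + P 3 := abs_sub_le_add_of_nonneg (hP.1 2) (hP.1 3)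
    _ = 1 - (P 0 + P 1) := by linarith

theorem abs_contrast_le_min {q : K} (hq : 0 < q) {P : Fin 4 → K}
    (hP : P ∈ stdSimplex K (Fin 4)) (h : P 0 - P 1 = q * (P 2 - P 3)) :
    |P 2 - P 3| ≤ min ((P 0 + P 1) / q) (1 - (P 0 + P 1)) :=
  le_min (abs_le_add_div_of_sub_eq_mul hq (hP.1 0) (hP.1 1) h) (abs_contrast_le_one_sub hP)

theorem maxContrastVector_mem_stdSimplex {q : K} (hq : 0 < q) :
    maxContrastVector q ∈ stdSimplex K (Fin 4) := by
  constructor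
  · have h_zero : 0 ≤ q / (1 + q) := by positivity
    have h_two : 0 ≤ 1 / (1 + q) := by positivity
    intro i
    fin_cases i
    exacts [h_zero, le_rfl, h_two, le_rfl]
  · have h_ne : 1 + q ≠ 0 := by positivity
    simp only [maxContrastVector, Fin.sum_univ_four, Matrix.cons_val, add_zero]
    rw [← add_div, add_comm q, div_self h_ne]

theorem abs_contrast_maxContrastVector {q : K} (hq : 0 < q) :
    |maxContrastVector q 2 - maxContrastVector q 3| = 1 / (1 + q) := by
  simp only [maxContrastVector, Matrix.cons_val, sub_zero]
  exact abs_of_pos (by positivity)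

theorem max_contrast_bound_general {q : K} (hq : 0 < q) :
    (∀ P ∈ stdSimplex K (Fin 4), P 0 - P 1 = q * (P 2 - P 3) →
      |P 2 - P 3| ≤ min ((P 0 + P 1) / q) (1 - (P 0 + P 1)) ∧
        min ((P 0 + P 1) / q) (1 - (P 0 + P 1)) ≤ 1 / (1 + q)) ∧
    maxContrastVector q ∈ stdSimplex K (Fin 4) ∧
    maxContrastVector q 0 - maxContrastVector q 1 =
      q * (maxContrastVector q 2 - maxContrastVector q 3) ∧
    |maxContrastVector q 2 - maxContrastVector q 3| = 1 / (1 + q) ∧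
    maxContrastVector q 0 + maxContrastVector q 1 = q / (1 + q) :=
  ⟨fun P hP h ↦ ⟨abs_contrast_le_min hq hP h, min_div_sub_le_div_one_add hq (P 0 + P 1) 1⟩,
    maxContrastVector_mem_stdSimplex hq, maxContrastVector_sub_eq_mul q,
    abs_contrast_maxContrastVector hq, maxContrastVector_apply_zero_add_apply_one q⟩

end OrderedField

/-- maximum-contrast bound for a single grabit with amplitude ratio `q`:
any probability vector on `{0,1,2,3}` with `P₀−P₁ = q(P₂−P₃)` satisfies
`|P₂−P₃| ≤ min((P₀+P₁)/q, 1−(P₀+P₁)) ≤ 1/(1+q)`, and the bound `1/(1+q)` is attained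
by `P = (q/(1+q), 0, 1/(1+q), 0)`, which moreover has `P₀+P₁ = q/(1+q)`. -/
theorem max_contrast_bound (q : ℝ) (hq : 0 < q) :
    (∀ P : Fin 4 → ℝ, (∀ i, 0 ≤ P i) → (∑ i, P i = 1) →
      P 0 - P 1 = q * (P 2 - P 3) →
      |P 2 - P 3| ≤ min ((P 0 + P 1) / q) (1 - (P 0 + P 1)) ∧
        min ((P 0 + P 1) / q) (1 - (P 0 + P 1)) ≤ 1 / (1 + q)) ∧
    (∀ i, (0 : ℝ) ≤ ![q / (1 + q), 0, 1 / (1 + q), 0] i) ∧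
    (∑ i, ![q / (1 + q), 0, 1 / (1 + q), (0 : ℝ)] i = 1) ∧
    (![q / (1 + q), 0, 1 / (1 + q), (0 : ℝ)] 0 - ![q / (1 + q), 0, 1 / (1 + q), (0 : ℝ)] 1 =
      q * (![q / (1 + q), 0, 1 / (1 + q), (0 : ℝ)] 2 - ![q / (1 + q), 0, 1 / (1 + q), (0 : ℝ)] 3)) ∧
    |![q / (1 + q), 0, 1 / (1 + q), (0 : ℝ)] 2 - ![q / (1 + q), 0, 1 / (1 + q), (0 : ℝ)] 3| =
      1 / (1 + q) ∧
    ![q / (1 + q), 0, 1 / (1 + q), (0 : ℝ)] 0 + ![q / (1 + q), 0, 1 / (1 + q), (0 : ℝ)] 1 =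
      q / (1 + q) := by
  obtain ⟨h_bound, ⟨h_nonneg, h_sum⟩, h_attained⟩ := max_contrast_bound_general hq
  exact ⟨fun P hP hs ↦ h_bound P ⟨hP, hs⟩, h_nonneg, h_sum, h_attained⟩
end

section
/- Let α < β be real numbers, let h : [α,β] → ℝ be twice continuously differentiable with h'(β) = 0, h''(β) < 0, and h(x) < h(β) for all x ∈ [α,β), and let Φ : [α,β] → ℝ be continuously differentiable with Φ(β) = 0 and Φ'(β) ≠ 0. Then, as N → ∞, N·e^{−N·h(β)}·∫_α^β Φ(x)·e^{N·h(x)} dx converges to Φ'(β)/h''(β); equivalently, ∫_α^β Φ(x)e^{N h(x)}dx is asymptotically equivalent to Φ'(β)·e^{N h(β)}/(N·h''(β)). (Laplace/saddle-point asymptotics for a boundary maximum with vanishing prefactor.) -/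
open Set Filter intervalIntegral

/-!
Write `Φ = h' • (Φ / h')`. The kernels `N e^{N (h x - h β)} h' x` have the primitive
`e^{N (h x - h β)}`, so their mass near `β` tends to `1`, while `N e^{N (h x - h β)}` tends to `0`
uniformly away from `β`. They therefore form an approximate identity at `β`, and the integral of
`Φ` against `N e^{N (h x - h β)}` tends to the left limit of `Φ / h'` at `β`. When `Φ` and `h'` both
vanish at `β`, this limit is the quotient of their derivatives.
-/

open MeasureTheory Topology
open scoped NNReal

section PeakFunction

variable {X E : Type*} [TopologicalSpace X] [NormedAddCommGroup E] [NormedSpace ℝ E]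
  {h : X → ℝ} {m : ℝ} {K : Set X}

theorem tendstoUniformlyOn_mul_exp_mul_sub_of_lt (hK : IsCompact K) (hh : ContinuousOn h K)
    (hlt : ∀ x ∈ K, h x < m) :
    TendstoUniformlyOn (fun N x => N * Real.exp (N * (h x - m))) 0 atTop K := by
  rcases K.eq_empty_or_nonempty with rfl | hne
  · exact tendstoUniformlyOn_empty
  obtain ⟨y, hyK, hy⟩ := hK.exists_isMaxOn hne hh
  have hdecay : Tendsto (fun N => N * Real.exp (N * (h y - m))) atTop (𝓝 0) := by
    simpa [mul_comm] using
      tendsto_rpow_mul_exp_neg_mul_atTop_nhds_zero 1 (m - h y) (sub_pos.2 (hlt y hyK))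
  rw [Metric.tendstoUniformlyOn_iff]
  intro ε hε
  filter_upwards [hdecay.eventually_lt_const hε, eventually_ge_atTop 0] with N hN hN0 x hx
  calc dist 0 (N * Real.exp (N * (h x - m))) = N * Real.exp (N * (h x - m)) := by
        rw [dist_zero_left, Real.norm_of_nonneg (by positivity)]
    _ ≤ N * Real.exp (N * (h y - m)) := by
        gcongr
        exact hy hx
    _ < ε := hN

variable [MeasurableSpace X] [BorelSpace X] {μ : Measure X} {x₀ : X} {s t : Set X}

theorem tendsto_setIntegral_mul_exp_smul [CompleteSpace E] {g : X → E} {L : E}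
    (hK : IsCompact K) (hh : ContinuousOn h K) (hlt : ∀ x ∈ K, x ≠ x₀ → h x < m)
    (hs : MeasurableSet s) (hsK : s ⊆ K) (ht : MeasurableSet t) (hts : t ⊆ s)
    (htx₀ : t ∈ 𝓝[s] x₀) (htμ : μ t ≠ ⊤)
    (hmass : Tendsto (fun N => ∫ x in t, N * Real.exp (N * (h x - m)) ∂μ) atTop (𝓝 1))
    (hg : IntegrableOn g s μ) (hL : Tendsto g (𝓝[s] x₀) (𝓝 L)) :
    Tendsto (fun N => ∫ x in s, (N * Real.exp (N * (h x - m))) • g x ∂μ) atTop (𝓝 L) := by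
  refine tendsto_setIntegral_peak_smul_of_integrableOn_of_tendsto hs ht hts htx₀ htμ ?_ ?_ hmass ?_
    hg hL
  · filter_upwards [eventually_ge_atTop 0] with N hN x _
    positivity
  · intro u hu hx₀
    refine (tendstoUniformlyOn_mul_exp_mul_sub_of_lt (hK.diff hu) (hh.mono sdiff_subset) ?_).mono
      (sdiff_subset_sdiff_left hsK)
    rintro x ⟨hxK, hxu⟩
    exact hlt x hxK (ne_of_mem_of_not_mem hx₀ hxu).symm
  · refine .of_forall fun N => ContinuousOn.aestronglyMeasurable ?_ hs
    have := hh.mono hsK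
    fun_prop

theorem tendsto_setIntegral_mul_exp_smul_of_weight [CompleteSpace E] {w : X → ℝ≥0} {Φ : X → E}
    {L : E} (hK : IsCompact K) (hh : ContinuousOn h K) (hlt : ∀ x ∈ K, x ≠ x₀ → h x < m)
    (hs : MeasurableSet s) (hsK : s ⊆ K) (ht : MeasurableSet t) (hts : t ⊆ s)
    (htx₀ : t ∈ 𝓝[s] x₀) (hw : Measurable w) (hw0 : ∀ x, w x ≠ 0)
    (hwt : IntegrableOn (fun x => (w x : ℝ)) t μ)
    (hmass : Tendsto (fun N => ∫ x in t, w x * (N * Real.exp (N * (h x - m))) ∂μ) atTop (𝓝 1))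
    (hΦ : IntegrableOn Φ s μ) (hL : Tendsto (fun x => (w x)⁻¹ • Φ x) (𝓝[s] x₀) (𝓝 L)) :
    Tendsto (fun N => ∫ x in s, (N * Real.exp (N * (h x - m))) • Φ x ∂μ) atTop (𝓝 L) := by
  have htν : μ.withDensity (fun x => w x) t ≠ ⊤ := by
    rw [withDensity_apply _ ht]
    exact (lintegral_coe_eq_integral _ hwt).trans_ne ENNReal.ofReal_ne_top
  have hgν : IntegrableOn (fun x => (w x)⁻¹ • Φ x) s (μ.withDensity fun x => w x) := by
    rw [IntegrableOn, restrict_withDensity hs, integrable_withDensity_iff_integrable_smul hw]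
    simpa only [smul_inv_smul₀ (hw0 _)] using! hΦ
  have hpeak := tendsto_setIntegral_mul_exp_smul hK hh hlt hs hsK ht hts htx₀ htν
    (by simpa only [setIntegral_withDensity_eq_setIntegral_smul hw _ ht] using! hmass) hgν hL
  simpa only [setIntegral_withDensity_eq_setIntegral_smul hw _ hs, smul_comm (w _) (_ : ℝ),
    smul_inv_smul₀ (hw0 _)] using hpeak

end PeakFunction

theorem integral_deriv_mul_exp_mul_sub {h h' : ℝ → ℝ} {a b : ℝ} (hab : a ≤ b)
    (hh : ContinuousOn h (Icc a b)) (hderiv : ∀ x ∈ Ioo a b, HasDerivAt h (h' x) x)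
    (hint : IntervalIntegrable h' volume a b) (N m : ℝ) :
    ∫ x in a..b, h' x * (N * Real.exp (N * (h x - m))) =
      Real.exp (N * (h b - m)) - Real.exp (N * (h a - m)) := by
  refine integral_eq_sub_of_hasDerivAt_of_le (f := fun x => Real.exp (N * (h x - m))) hab
    (by fun_prop) (fun x hx => ?_) ?_
  · exact (((hderiv x hx).sub_const m).const_mul N).exp.congr_deriv (by ring)
  · refine hint.mul_continuousOn ?_
    rw [uIcc_of_le hab]
    fun_prop

theorem tendsto_setIntegral_deriv_mul_exp_mul_sub {h h' : ℝ → ℝ} {a b : ℝ} (hab : a ≤ b)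
    (hh : ContinuousOn h (Icc a b)) (hderiv : ∀ x ∈ Ioo a b, HasDerivAt h (h' x) x)
    (hint : IntervalIntegrable h' volume a b) (hlt : h a < h b) :
    Tendsto (fun N => ∫ x in Ioo a b, h' x * (N * Real.exp (N * (h x - h b)))) atTop (𝓝 1) := by
  have hdecay : Tendsto (fun N => Real.exp (N * (h a - h b))) atTop (𝓝 0) :=
    Real.tendsto_exp_atBot.comp (tendsto_id.atTop_mul_const_of_neg (sub_neg.2 hlt))
  simp only [← integral_Ioc_eq_integral_Ioo, ← integral_of_le hab,
    integral_deriv_mul_exp_mul_sub hab hh hderiv hint]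
  simpa using hdecay.const_sub 1

theorem tendsto_inv_smul_of_hasDerivWithinAt {𝕜 E : Type*} [NontriviallyNormedField 𝕜]
    [NormedAddCommGroup E] [NormedSpace 𝕜 E] {f : 𝕜 → E} {g : 𝕜 → 𝕜} {f' : E} {g' x : 𝕜}
    {s : Set 𝕜} (hf : HasDerivWithinAt f f' s x) (hg : HasDerivWithinAt g g' s x) (hg' : g' ≠ 0)
    (hfx : f x = 0) (hgx : g x = 0) :
    Tendsto (fun y => (g y)⁻¹ • f y) (𝓝[s \ {x}] x) (𝓝 (g'⁻¹ • f')) := by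
  rw [hasDerivWithinAt_iff_tendsto_slope] at hf hg
  refine ((hg.inv₀ hg').smul hf).congr' ?_
  filter_upwards [self_mem_nhdsWithin] with y hy
  have hyx : y - x ≠ 0 := sub_ne_zero.2 hy.2
  simp [slope_def_module, hfx, hgx, smul_smul, hyx]

theorem eventually_nhdsLT_pos_of_hasDerivWithinAt_neg {f : ℝ → ℝ} {f' x : ℝ}
    (hf : HasDerivWithinAt f f' (Iio x) x) (hf' : f' < 0) (hfx : f x = 0) :
    ∀ᶠ y in 𝓝[<] x, 0 < f y := by
  rw [hasDerivWithinAt_iff_tendsto_slope' self_notMem_Iio] at hf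
  filter_upwards [hf.eventually_lt_const hf', self_mem_nhdsWithin] with y hslope hy
  contrapose! hslope
  rw [slope_def_field, hfx, sub_zero]
  exact div_nonneg_of_nonpos hslope (sub_nonpos.2 (mem_Iio.1 hy).le)

theorem integral_mul_exp_mul_sub_smul {X E : Type*} [MeasurableSpace X] [NormedAddCommGroup E]
    [NormedSpace ℝ E] (μ : Measure X) (h : X → ℝ) (Φ : X → E) (N m : ℝ) :
    ∫ x, (N * Real.exp (N * (h x - m))) • Φ x ∂μ =
      (N * Real.exp (-N * m)) • ∫ x, Real.exp (N * h x) • Φ x ∂μ := by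
  rw [← MeasureTheory.integral_smul]
  congr with x
  rw [smul_smul, mul_assoc, ← Real.exp_add]
  ring_nf

/-- The density, with respect to Lebesgue measure, of a measure for which the kernels
`N e^{N (h x - h β)}` form an approximate identity at `β`. Its value where `deriv h` is not positive
is arbitrary, but nonzero so that one can divide by the density. -/
noncomputable def derivWeight (h : ℝ → ℝ) (x : ℝ) : ℝ≥0 :=
  if 0 < deriv h x then (deriv h x).toNNReal else 1

section DerivWeight

variable {h : ℝ → ℝ} {x : ℝ}

theorem measurable_derivWeight : Measurable (derivWeight h) :=
  .ite (measurableSet_lt measurable_const (measurable_deriv h))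
    (measurable_deriv h).real_toNNReal measurable_const

theorem derivWeight_ne_zero (x : ℝ) : derivWeight h x ≠ 0 := by
  by_cases hx : 0 < deriv h x <;> simp [derivWeight, hx]

theorem coe_derivWeight (hx : 0 < deriv h x) : (derivWeight h x : ℝ) = deriv h x := by
  simp [derivWeight, hx, hx.le]

end DerivWeight

theorem laplace_boundary_max_vanishing_prefactor_general {E : Type*} [NormedAddCommGroup E]
    [NormedSpace ℝ E] [CompleteSpace E] {α β : ℝ} (hαβ : α < β) {h : ℝ → ℝ} {Φ : ℝ → E} {L : E}
    (hh : ContinuousOn h (Icc α β)) (hmax : ∀ x ∈ Ico α β, h x < h β)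
    (hpos : ∀ᶠ x in 𝓝[<] β, 0 < deriv h x) (hΦ : IntervalIntegrable Φ volume α β)
    (hL : Tendsto (fun x => (deriv h x)⁻¹ • Φ x) (𝓝[<] β) (𝓝 L)) :
    Tendsto (fun N : ℝ => (N * Real.exp (-N * h β)) • ∫ x in α..β, Real.exp (N * h x) • Φ x)
      atTop (𝓝 L) := by
  obtain ⟨γ, ⟨hαγ, hγβ⟩, hγpos⟩ := (mem_nhdsLT_iff_exists_mem_Ico_Ioo_subset hαβ).1 hpos
  have hhγ : ContinuousOn h (Icc γ β) := hh.mono (Icc_subset_Icc_left hαγ)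
  have hderiv : ∀ x ∈ Ioo γ β, HasDerivAt h (deriv h x) x := fun x hx =>
    (differentiableAt_of_deriv_ne_zero (hγpos hx).ne').hasDerivAt
  have hint : IntegrableOn (deriv h) (Ioc γ β) :=
    integrableOn_deriv_of_nonneg hhγ hderiv fun x hx => (hγpos hx).le
  have hweight : EqOn (fun x => (derivWeight h x : ℝ)) (deriv h) (Ioo γ β) :=
    fun x hx => coe_derivWeight (hγpos hx)
  have hmass : Tendsto (fun N => ∫ x in Ioo γ β, derivWeight h x * (N * Real.exp (N * (h x - h β))))
      atTop (𝓝 1) := by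
    refine (tendsto_setIntegral_deriv_mul_exp_mul_sub hγβ.le hhγ hderiv
      ((intervalIntegrable_iff_integrableOn_Ioc_of_le hγβ.le).2 hint)
      (hmax γ ⟨hαγ, hγβ⟩)).congr fun N => setIntegral_congr_fun measurableSet_Ioo fun x hx => ?_
    simp only [coe_derivWeight (hγpos hx)]
  have hlim : Tendsto (fun x => (derivWeight h x)⁻¹ • Φ x) (𝓝[Ioo α β] β) (𝓝 L) := by
    rw [nhdsWithin_Ioo_eq_nhdsLT hαβ]
    refine hL.congr' (hpos.mono fun x hx => ?_)
    simp only [NNReal.smul_def, NNReal.coe_inv, coe_derivWeight hx]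
  have hpeak := tendsto_setIntegral_mul_exp_smul_of_weight isCompact_Icc hh
    (fun x hx hxβ => hmax x ⟨hx.1, hx.2.lt_of_ne hxβ⟩) measurableSet_Ioo Ioo_subset_Icc_self
    measurableSet_Ioo (Ioo_subset_Ioo_left hαγ)
    (nhdsWithin_Ioo_eq_nhdsLT hαβ ▸ Ioo_mem_nhdsLT hγβ) measurable_derivWeight derivWeight_ne_zero
    ((hint.mono_set Ioo_subset_Ioc_self).congr_fun hweight.symm measurableSet_Ioo) hmass
    (hΦ.1.mono_set Ioo_subset_Ioc_self) hlim
  refine hpeak.congr fun N => ?_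
  rw [integral_mul_exp_mul_sub_smul, integral_of_le hαβ.le, integral_Ioc_eq_integral_Ioo]

/-- Laplace/saddle-point asymptotics for a boundary maximum with vanishing
prefactor.  If `h` is C² on `[α,β]` with `h'(β) = 0`, `h''(β) < 0`, and `h < h(β)` on
`[α,β)`, and `Φ` is C¹ on `[α,β]` with `Φ(β) = 0` and `Φ'(β) ≠ 0`, then
`N e^{−N h(β)} ∫_α^β Φ(x) e^{N h(x)} dx → Φ'(β)/h''(β)` as `N → ∞`. -/
theorem laplace_boundary_max_vanishing_prefactor
    (α β : ℝ) (hαβ : α < β) (h Φ : ℝ → ℝ)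
    (hh : ContDiffOn ℝ 2 h (Icc α β))
    (hΦ : ContDiffOn ℝ 1 Φ (Icc α β))
    (hh' : derivWithin h (Icc α β) β = 0)
    (hh'' : derivWithin (derivWithin h (Icc α β)) (Icc α β) β < 0)
    (hmax : ∀ x ∈ Ico α β, h x < h β)
    (hΦβ : Φ β = 0)
    (hΦ' : derivWithin Φ (Icc α β) β ≠ 0) :
    Tendsto
      (fun N : ℝ => N * Real.exp (-N * h β) * ∫ x in α..β, Φ x * Real.exp (N * h x))
      atTop
      (nhds (derivWithin Φ (Icc α β) β /
        derivWithin (derivWithin h (Icc α β)) (Icc α β) β)) := by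
  have hβ : β ∈ Icc α β := right_mem_Icc.2 hαβ.le
  have hderiv : derivWithin h (Icc α β) =ᶠ[𝓝[<] β] deriv h := by
    filter_upwards [Ioo_mem_nhdsLT hαβ] with x hx
    exact derivWithin_of_mem_nhds (Icc_mem_nhds hx.1 hx.2)
  have hh'β := ((hh.derivWithin (uniqueDiffOn_Icc hαβ) one_add_one_eq_two.le).differentiableOn
    one_ne_zero β hβ).hasDerivWithinAt.mono_of_mem_nhdsWithin (Icc_mem_nhdsLT hαβ)
  have hΦβ' := (hΦ.differentiableOn one_ne_zero β hβ).hasDerivWithinAt.mono_of_mem_nhdsWithin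
    (Icc_mem_nhdsLT hαβ)
  have hpos : ∀ᶠ x in 𝓝[<] β, 0 < deriv h x := by
    filter_upwards [eventually_nhdsLT_pos_of_hasDerivWithinAt_neg hh'β hh'' hh', hderiv]
      with x hx hxeq
    rwa [← hxeq]
  have hratio := tendsto_inv_smul_of_hasDerivWithinAt hΦβ' hh'β hh''.ne hΦβ hh'
  rw [sdiff_singleton_eq_self self_notMem_Iio] at hratio
  simpa only [smul_eq_mul, mul_comm (Real.exp _) (Φ _), inv_mul_eq_div] using
    laplace_boundary_max_vanishing_prefactor_general hαβ hh.continuousOn hmax hpos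
      (hΦ.continuousOn.intervalIntegrable_of_Icc hαβ.le)
      (hratio.congr' (hderiv.mono fun x hx => by rw [hx]))
end
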